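/- arXiv:1310.5921 — 2 statements merged into one kernel-verified Lean document; each statement's English description precedes it below -/
import Mathlib

section
/- For every integer n ≥ 1 and every real number x, the Euler polynomial E_n(x) satisfies E_n(x) = Σ_{k=0}^{n} (−1)^{n−k} C(n, k) [ Σ_{ℓ=1}^{n−k+1} ((−1)^{ℓ−1} (ℓ−1)!/2^{ℓ−1}) S(n−k+1, ℓ) ] x^k. Equivalently, for each real x, the n-th derivative at t = 0 of the function t ↦ 2 e^{x t}/(e^t + 1) equals the right-hand side. -/
open Real Finset

/-- Stirling numbers of the second kind, real-valued, via the explicit formula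
`S(k,m) = (1/m!) ∑_{ℓ=1}^m (-1)^(m-ℓ) C(m,ℓ) ℓ^k`; this gives `0` when `m > k`. -/
noncomputable def S2 (k m : ℕ) : ℝ :=
  (1 / (Nat.factorial m : ℝ)) *
    ∑ ℓ ∈ Finset.Icc 1 m, (-1 : ℝ) ^ (m - ℓ) * (Nat.choose m ℓ : ℝ) * (ℓ : ℝ) ^ k

lemma S2_aux (k : ℕ) : ∀ m : ℕ,
    ∑ ℓ ∈ Finset.range (m + 1), (-1 : ℝ) ^ (m - ℓ) * (Nat.choose m ℓ : ℝ) * (ℓ : ℝ) ^ k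
      = (m.factorial : ℝ) * (Nat.stirlingSecond k m : ℝ) := by
  induction k with
  | zero =>
    intro m
    have h := add_pow (1 : ℝ) (-1) m
    have h2 : ∑ ℓ ∈ Finset.range (m + 1), (-1 : ℝ) ^ (m - ℓ) * (Nat.choose m ℓ : ℝ) * (ℓ : ℝ) ^ 0
        = (1 + -1 : ℝ) ^ m := by
      rw [h]
      refine Finset.sum_congr rfl fun i _ => by simp
    rw [h2]
    cases m <;> simp
  | succ k ih =>
    intro m
    cases m with
    | zero => simp
    | succ m =>
      have h1 := ih (m + 1)
      have h2 := ih m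
      rw [Nat.stirlingSecond_succ_succ, Nat.factorial_succ]
      rw [Nat.factorial_succ] at h1
      push_cast at h1 ⊢
      have key : ∑ ℓ ∈ Finset.range (m + 1 + 1),
          (-1 : ℝ) ^ (m + 1 - ℓ) * (Nat.choose (m + 1) ℓ : ℝ) * (ℓ : ℝ) ^ (k + 1)
          = (m + 1 : ℝ) * ∑ ℓ ∈ Finset.range (m + 1 + 1),
              (-1 : ℝ) ^ (m + 1 - ℓ) * (Nat.choose (m + 1) ℓ : ℝ) * (ℓ : ℝ) ^ k
            + (m + 1 : ℝ) * ∑ ℓ ∈ Finset.range (m + 1),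
              (-1 : ℝ) ^ (m - ℓ) * (Nat.choose m ℓ : ℝ) * (ℓ : ℝ) ^ k := by
        rw [Finset.sum_range_succ, Finset.sum_range_succ _ (m + 1), mul_add, Finset.mul_sum,
          Finset.mul_sum, add_right_comm, ← Finset.sum_add_distrib]
        congr 1
        · refine Finset.sum_congr rfl fun i hi => ?_
          have hi' : i ≤ m := by simpa [Nat.lt_succ_iff] using hi
          have hc := Nat.choose_mul_succ_eq m i
          have hc' : (m.choose i : ℝ) * (m + 1) = ((m + 1).choose i : ℝ) * (m + 1 - i) := by
            have : ((m + 1 - i : ℕ) : ℝ) = (m : ℝ) + 1 - i := by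
              rw [Nat.cast_sub (by omega)]; push_cast; ring
            rw [← this]; exact_mod_cast hc
          rw [show m + 1 - i = (m - i) + 1 by omega, pow_succ (-1 : ℝ), pow_succ (i : ℝ)]
          linear_combination (-(-1 : ℝ) ^ (m - i) * (i : ℝ) ^ k) * hc'
        · push_cast; ring
      rw [key, h1, h2]
      ring

lemma S2_eq (k m : ℕ) : S2 (k + 1) m = (Nat.stirlingSecond (k + 1) m : ℝ) := by
  have h := S2_aux (k + 1) m
  have hs : ∑ ℓ ∈ Finset.Icc 1 m, (-1 : ℝ) ^ (m - ℓ) * (Nat.choose m ℓ : ℝ) * (ℓ : ℝ) ^ (k + 1)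
      = ∑ ℓ ∈ Finset.range (m + 1),
        (-1 : ℝ) ^ (m - ℓ) * (Nat.choose m ℓ : ℝ) * (ℓ : ℝ) ^ (k + 1) := by
    refine Finset.sum_subset (fun i hi => ?_) (fun i hi hi' => ?_)
    · simp only [Finset.mem_Icc, Finset.mem_range] at *; omega
    · have : i = 0 := by
        simp only [Finset.mem_Icc, Finset.mem_range] at *; omega
      subst this; simp
  have hf : (m.factorial : ℝ) ≠ 0 := by positivity
  rw [S2, hs, h]
  field_simp

lemma v_deriv (t : ℝ) : HasDerivAt (fun t : ℝ => (Real.exp t + 1)⁻¹)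
    (((Real.exp t + 1)⁻¹) ^ 2 - (Real.exp t + 1)⁻¹) t := by
  have hp : Real.exp t + 1 ≠ 0 := by positivity
  refine (((Real.hasDerivAt_exp t).add_const 1).fun_inv hp).congr_deriv ?_
  field_simp
  ring

lemma v_iter (m : ℕ) : iteratedDeriv m (fun t : ℝ => (Real.exp t + 1)⁻¹) =
    fun t => ∑ ℓ ∈ Finset.range (m + 1), ((-1 : ℝ) ^ (m + ℓ) * (ℓ.factorial : ℝ) *
      (Nat.stirlingSecond (m + 1) (ℓ + 1) : ℝ)) * ((Real.exp t + 1)⁻¹) ^ (ℓ + 1) := by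
  induction m with
  | zero => ext t; simp [iteratedDeriv_zero, Nat.stirlingSecond_self]
  | succ m ih =>
    rw [iteratedDeriv_succ, ih]
    ext t
    have hd := HasDerivAt.fun_sum (u := Finset.range (m + 1)) (fun ℓ _ =>
      ((v_deriv t).fun_pow (ℓ + 1)).const_mul ((-1 : ℝ) ^ (m + ℓ) * (ℓ.factorial : ℝ) *
      (Nat.stirlingSecond (m + 1) (ℓ + 1) : ℝ)))
    rw [hd.deriv]
    generalize (Real.exp t + 1)⁻¹ = v
    have e : ∀ ℓ : ℕ, ((-1 : ℝ) ^ (m + 1 + ℓ) * (ℓ.factorial : ℝ) *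
      (Nat.stirlingSecond (m + 1 + 1) (ℓ + 1) : ℝ)) * v ^ (ℓ + 1)
       = ((-1 : ℝ) ^ (m + 1 + ℓ) * (ℓ.factorial : ℝ) *
          ((ℓ + 1) * Nat.stirlingSecond (m + 1) (ℓ + 1) : ℝ)) * v ^ (ℓ + 1)
        + ((-1 : ℝ) ^ (m + 1 + ℓ) * (ℓ.factorial : ℝ) *
          (Nat.stirlingSecond (m + 1) ℓ : ℝ)) * v ^ (ℓ + 1) := by
      intro ℓ
      rw [Nat.stirlingSecond_succ_succ]; push_cast; ring
    simp only [e]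
    rw [Finset.sum_add_distrib, Finset.sum_range_succ _ (m + 1),
      Finset.sum_range_succ' _ (m + 1),
      Nat.stirlingSecond_eq_zero_of_lt (show m + 1 < m + 1 + 1 by omega),
      Nat.stirlingSecond_succ_zero]
    simp only [Nat.cast_zero, mul_zero, zero_mul, add_zero]
    rw [← Finset.sum_add_distrib]
    refine Finset.sum_congr rfl fun ℓ _ => ?_
    rw [Nat.factorial_succ]
    push_cast
    ring

theorem stmt_13 (n : ℕ) (hn : 1 ≤ n) (x : ℝ) :
    iteratedDeriv n (fun t : ℝ => 2 * Real.exp (x * t) / (Real.exp t + 1)) 0 =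
      ∑ k ∈ Finset.range (n + 1),
        (-1 : ℝ) ^ (n - k) * (Nat.choose n k : ℝ) *
          (∑ ℓ ∈ Finset.Icc 1 (n - k + 1),
            ((-1 : ℝ) ^ (ℓ - 1) * (Nat.factorial (ℓ - 1) : ℝ) / 2 ^ (ℓ - 1)) *
              S2 (n - k + 1) ℓ) *
          x ^ k := by
  have hf : (fun t : ℝ => 2 * Real.exp (x * t) / (Real.exp t + 1)) =
      fun t => 2 * (Real.exp (x * t) * (Real.exp t + 1)⁻¹) := by
    ext t; rw [div_eq_mul_inv, mul_assoc]
  have hp : ∀ t : ℝ, Real.exp t + 1 ≠ 0 := fun t => by positivity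
  have h1 : ContDiffAt ℝ n (fun t : ℝ => Real.exp (x * t)) 0 := by fun_prop
  have h2 : ContDiffAt ℝ n (fun t : ℝ => (Real.exp t + 1)⁻¹) 0 :=
    ContDiffAt.inv (by fun_prop) (hp 0)
  rw [hf, iteratedDeriv_const_mul_field, iteratedDeriv_fun_mul h1 h2, Finset.mul_sum]
  refine Finset.sum_congr rfl fun k _ => ?_
  rw [v_iter, iteratedDeriv_exp_const_mul]
  have hI : ∀ (m : ℕ) (f : ℕ → ℝ), ∑ ℓ ∈ Finset.Icc 1 (m + 1), f ℓ
      = ∑ ℓ ∈ Finset.range (m + 1), f (ℓ + 1) := by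
    intro m f
    rw [Finset.range_eq_Ico, Finset.sum_Ico_add' f 0 (m + 1) 1]
    rfl
  rw [hI]
  simp only [S2_eq, mul_zero, Real.exp_zero, Nat.add_sub_cancel, mul_one, Finset.mul_sum,
    Finset.sum_mul]
  refine Finset.sum_congr rfl fun ℓ _ => ?_
  rw [show (1 + 1 : ℝ)⁻¹ = 1 / 2 by norm_num, div_pow, one_pow, pow_add, pow_succ (2 : ℝ)]
  field_simp
end

section
/- For every integer k ≥ 1 and every real number t, the k-th power of the function H(t) = 1/(e^t + 1) satisfies (1/(e^t + 1))^k = ((−1)^{k−1}/(k−1)!) Σ_{m=1}^{k} (−1)^{m−1} s(k, m) H^{(m−1)}(t), where H^{(m−1)} denotes the (m−1)-st derivative of H (with H^{(0)} = H). -/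
open Real Finset

/-- Signed Stirling numbers of the first kind, real-valued: the coefficient of `x^m` in
`x (x-1) ⋯ (x-k+1)`. -/
noncomputable def s1 (k m : ℕ) : ℝ := (descPochhammer ℝ k).coeff m

lemma s1_zero (n : ℕ) : s1 (n + 1) 0 = 0 := by
  simp [s1, descPochhammer_succ_left]

lemma s1_rec (n j : ℕ) : s1 (n + 1) (j + 1) = s1 n j - n * s1 n (j + 1) := by
  unfold s1
  rw [descPochhammer_succ_right, mul_sub, Polynomial.coeff_sub, Polynomial.coeff_mul_X,
    ← Polynomial.C_eq_natCast, Polynomial.coeff_mul_C]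
  ring

lemma s1_large (n : ℕ) : s1 n (n + 1) = 0 := by
  unfold s1
  apply Polynomial.coeff_eq_zero_of_natDegree_lt
  rw [descPochhammer_natDegree]
  omega

lemma H_smooth : ContDiff ℝ (⊤ : ℕ∞) (fun t : ℝ => 1 / (Real.exp t + 1)) := by
  apply ContDiff.div contDiff_const (Real.contDiff_exp.add contDiff_const)
  intro x
  positivity

lemma H_deriv (t : ℝ) : HasDerivAt (fun t : ℝ => 1 / (Real.exp t + 1))
    ((1 / (Real.exp t + 1)) ^ 2 - 1 / (Real.exp t + 1)) t := by
  have h0 : Real.exp t + 1 ≠ 0 := by positivity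
  have h := (hasDerivAt_const t (1 : ℝ)).div ((Real.hasDerivAt_exp t).add_const 1) h0
  refine h.congr_deriv ?_
  field_simp
  ring

lemma iter_deriv (j : ℕ) (t : ℝ) :
    HasDerivAt (iteratedDeriv j (fun t : ℝ => 1 / (Real.exp t + 1)))
      (iteratedDeriv (j + 1) (fun t : ℝ => 1 / (Real.exp t + 1)) t) t := by
  rw [iteratedDeriv_succ]
  apply DifferentiableAt.hasDerivAt
  apply (H_smooth.differentiable_iteratedDeriv j _).differentiableAt
  exact_mod_cast WithTop.coe_lt_top j

lemma key (n : ℕ) : ∀ t : ℝ, ∑ j ∈ range (n + 1), (-1 : ℝ) ^ j * s1 (n + 1) (j + 1) *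
      iteratedDeriv j (fun t : ℝ => 1 / (Real.exp t + 1)) t =
    (-1) ^ n * (n.factorial : ℝ) * (1 / (Real.exp t + 1)) ^ (n + 1) := by
  induction n with
  | zero => intro t; simp [s1]
  | succ n ih =>
    intro t
    have hL := HasDerivAt.fun_sum (u := range (n + 1)) (fun j _ =>
      (iter_deriv j t).const_mul ((-1 : ℝ) ^ j * s1 (n + 1) (j + 1)))
    have hR := ((H_deriv t).fun_pow (n + 1)).const_mul ((-1 : ℝ) ^ n * (n.factorial : ℝ))
    rw [funext ih] at hL
    have hE := hL.unique hR
    have e1 : ∑ j ∈ range (n + 1 + 1), (-1 : ℝ) ^ j * s1 (n + 1) j *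
        iteratedDeriv j (fun t : ℝ => 1 / (Real.exp t + 1)) t =
        - ∑ j ∈ range (n + 1), (-1 : ℝ) ^ j * s1 (n + 1) (j + 1) *
        iteratedDeriv (j + 1) (fun t : ℝ => 1 / (Real.exp t + 1)) t := by
      rw [sum_range_succ', s1_zero, ← sum_neg_distrib]
      simp only [mul_zero, zero_mul, add_zero]
      exact sum_congr rfl fun j _ => by ring
    have e2 : ∑ j ∈ range (n + 1 + 1), (-1 : ℝ) ^ j * s1 (n + 1) (j + 1) *
        iteratedDeriv j (fun t : ℝ => 1 / (Real.exp t + 1)) t =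
        (-1) ^ n * (n.factorial : ℝ) * (1 / (Real.exp t + 1)) ^ (n + 1) := by
      rw [sum_range_succ, s1_large, ih]
      ring
    have e3 : ∑ j ∈ range (n + 1 + 1), (-1 : ℝ) ^ j * s1 (n + 1 + 1) (j + 1) *
        iteratedDeriv j (fun t : ℝ => 1 / (Real.exp t + 1)) t =
        ∑ j ∈ range (n + 1 + 1), (-1 : ℝ) ^ j * s1 (n + 1) j *
        iteratedDeriv j (fun t : ℝ => 1 / (Real.exp t + 1)) t - ((n + 1 : ℕ) : ℝ) *
        ∑ j ∈ range (n + 1 + 1), (-1 : ℝ) ^ j * s1 (n + 1) (j + 1) *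
        iteratedDeriv j (fun t : ℝ => 1 / (Real.exp t + 1)) t := by
      rw [mul_sum, ← sum_sub_distrib]
      refine sum_congr rfl fun j _ => ?_
      rw [s1_rec (n + 1) j]
      ring
    rw [e3, e1, e2, hE, Nat.factorial_succ]
    simp only [Nat.add_sub_cancel]
    push_cast
    ring

theorem stmt_18 (k : ℕ) (hk : 1 ≤ k) (t : ℝ) :
    (1 / (Real.exp t + 1)) ^ k =
      ((-1 : ℝ) ^ (k - 1) / (Nat.factorial (k - 1) : ℝ)) *
        ∑ m ∈ Finset.Icc 1 k,
          (-1 : ℝ) ^ (m - 1) * s1 k m *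
            iteratedDeriv (m - 1) (fun t : ℝ => 1 / (Real.exp t + 1)) t := by
  obtain ⟨n, rfl⟩ : ∃ n, k = n + 1 := ⟨k - 1, by omega⟩
  have e : ∑ m ∈ Finset.Icc 1 (n + 1), (-1 : ℝ) ^ (m - 1) * s1 (n + 1) m *
      iteratedDeriv (m - 1) (fun t : ℝ => 1 / (Real.exp t + 1)) t =
      ∑ j ∈ range (n + 1), (-1 : ℝ) ^ j * s1 (n + 1) (j + 1) *
      iteratedDeriv j (fun t : ℝ => 1 / (Real.exp t + 1)) t := by
    rw [← Finset.Ico_add_one_right_eq_Icc, sum_Ico_eq_sum_range]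
    refine sum_congr (by simp) fun j _ => ?_
    simp only [Nat.add_comm 1 j, Nat.add_sub_cancel]
  rw [e, key, Nat.add_sub_cancel]
  have hf : (n.factorial : ℝ) ≠ 0 := by positivity
  have hs : (-1 : ℝ) ^ n * (-1) ^ n = 1 := by rw [← mul_pow]; simp
  generalize (1 / (Real.exp t + 1)) ^ (n + 1) = A
  calc A = ((-1 : ℝ) ^ n * (-1) ^ n) * A := by rw [hs, one_mul]
    _ = _ := by field_simp
end
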